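/- Let μ_1, …, μ_n be probability measures on [0,1], let ε ∈ (0,1), and let q_{−1} := −1 < 0 ≤ q_0 < q_1 < ⋯ < q_{M+1} = 1 be a finite grid. For each i ∈ [n] let μ̃_i be a discrete probability measure supported on {q_0, …, q_{M+1}} satisfying (1+ε)^{−2} · μ_i((q_{l−1}, q_l] ∩ [0,1]) ≤ μ̃_i({q_l}) ≤ (1+ε)^{2} · μ_i((q_{l−1}, q_l] ∩ [0,1]) for all l ∈ {0, …, M+1}. Let B ⊆ {q_0, …, q_{M+1}}^n be a finite set and c ∈ ℝ^n with c ≥ 0. Then B is a Pareto cover of μ := ∏_{i=1}^n μ_i if and only if B is a Pareto cover of μ̃ := ∏_{i=1}^n μ̃_i, and in that case (1+ε)^{−2n} · E_μ[c_B] ≤ E_{μ̃}[c_B] ≤ (1+ε)^{2n} · E_μ[c_B]. -/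

import Mathlib

open MeasureTheory

/-- `c_B(x) = min { cᵀb : b ∈ B, x ≤ b }` for a finite set `B ⊆ [0,1]^n`
(with the convention `sInf ∅ = 0`; for a Pareto cover the uncovered points
have measure zero). -/
noncomputable def paretoMinF {n : ℕ} (c : Fin n → ℝ) (B : Finset (Fin n → ℝ))
    (x : Fin n → ℝ) : ℝ :=
  sInf ((fun b => ∑ i, c i * b i) '' {b | b ∈ B ∧ x ≤ b})

/-!
Round every coordinate up to the next grid point. Since the elements of `B` lie on the grid, `x`
and its rounding are dominated by the same elements of `B`, so `μ` may be replaced by the product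
of the rounded marginals. The atom of the `i`-th rounded marginal at `q_l` is
`μ_i((q_{l-1}, q_l])`, so the hypothesis compares two measures on the grid atom by atom, each
bounding the other up to a constant factor. Such bounds multiply under products, and they transfer
null sets and integrals of nonnegative functions.
-/

open scoped NNReal ENNReal

section RoundUp

variable {α : Type*} [LinearOrder α]

/-- The least element of the finite grid `G` that is at least `x`. When there is none the value is
`x` itself; this choice makes `roundUp_le_iff` hold for all `x`. -/
def roundUp (G : Finset α) (x : α) : α :=
  if h : (G.filter (x ≤ ·)).Nonempty then (G.filter (x ≤ ·)).min' h else x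

variable {G : Finset α} {x b : α}

lemma le_roundUp : x ≤ roundUp G x := by
  unfold roundUp
  split_ifs with h
  · exact (Finset.mem_filter.1 (Finset.min'_mem _ h)).2
  · exact le_rfl

lemma roundUp_mem (hb : b ∈ G) (hxb : x ≤ b) : roundUp G x ∈ G := by
  have h : (G.filter (x ≤ ·)).Nonempty := ⟨b, Finset.mem_filter.2 ⟨hb, hxb⟩⟩
  rw [roundUp, dif_pos h]
  exact (Finset.mem_filter.1 (Finset.min'_mem _ h)).1

lemma roundUp_le_iff (hb : b ∈ G) : roundUp G x ≤ b ↔ x ≤ b := by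
  refine ⟨le_roundUp.trans, fun hxb => ?_⟩
  have hb' : b ∈ G.filter (x ≤ ·) := Finset.mem_filter.2 ⟨hb, hxb⟩
  rw [roundUp, dif_pos ⟨b, hb'⟩]
  exact Finset.min'_le _ _ hb'

lemma roundUp_eq_iff (hb : b ∈ G) :
    roundUp G x = b ↔ x ≤ b ∧ ∀ a ∈ G, a < b → a < x := by
  constructor
  · rintro rfl
    refine ⟨le_roundUp, fun a ha hab => ?_⟩
    rwa [← not_le, ← roundUp_le_iff ha, not_le]
  · rintro ⟨hxb, hlt⟩
    refine ((roundUp_le_iff hb).2 hxb).antisymm (not_lt.1 fun h => ?_)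
    exact (hlt _ (roundUp_mem hb hxb) h).not_ge le_roundUp

lemma roundUp_mono (G : Finset α) : Monotone (roundUp G) := by
  intro x y hxy
  by_cases hx : (G.filter (x ≤ ·)).Nonempty
  · obtain ⟨b, hb⟩ := hx
    rw [Finset.mem_filter] at hb
    by_contra! hlt
    have hy : roundUp G y ∈ G := roundUp_mem (roundUp_mem hb.1 hb.2) (le_roundUp.trans hlt.le)
    exact hlt.not_ge ((roundUp_le_iff hy).2 (hxy.trans le_roundUp))
  · rw [roundUp, dif_neg hx]
    exact hxy.trans le_roundUp

lemma forall_roundUp_le_iff {ι : Type*} {x b : ι → α} (hb : ∀ i, b i ∈ G) :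
    (fun i => roundUp G (x i)) ≤ b ↔ x ≤ b :=
  forall_congr' fun i => roundUp_le_iff (hb i)

lemma roundUp_image_Iic_eq_iff {g : ℕ → α} {N l : ℕ} (hg : StrictMonoOn g (Set.Iic N))
    (hl : l ≤ N) :
    roundUp ((Finset.Iic N).image g) x = g l ↔ x ≤ g l ∧ (l ≠ 0 → g (l - 1) < x) := by
  rw [roundUp_eq_iff (Finset.mem_image_of_mem g (Finset.mem_Iic.2 hl))]
  simp only [Finset.forall_mem_image, Finset.mem_Iic]
  refine and_congr_right fun _ => ⟨fun h hl0 => ?_, fun h m hm hml => ?_⟩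
  · have hpred : l - 1 ≤ N := by omega
    exact h hpred (hg hpred hl (by omega))
  · have hml' : m < l := (hg.lt_iff_lt hm hl).1 hml
    exact (hg.monotoneOn hm ((Nat.sub_le l 1).trans hl) (by omega)).trans_lt (h (by omega))

end RoundUp

section Domination

variable {α : Type*} {mα : MeasurableSpace α} {ν ν' : Measure α}

lemma le_of_forall_singleton_le [MeasurableSingletonClass α] {S : Set α} (hS : S.Countable)
    (hνS : ∀ᵐ x ∂ν, x ∈ S) (h : ∀ x ∈ S, ν {x} ≤ ν' {x}) : ν ≤ ν' := by
  refine Measure.le_iff'.2 fun s => ?_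
  have hsS : (s ∩ S).Countable := hS.mono Set.inter_subset_right
  calc ν s = ν (s ∩ S) := (measure_inter_conull (mem_ae_iff.1 hνS)).symm
    _ = ∑' x : ↥(s ∩ S), ν {x.1} := by
      simpa using (tsum_measure_preimage_singleton hsS (f := id) (μ := ν) (by simp)).symm
    _ ≤ ∑' x : ↥(s ∩ S), ν' {x.1} := ENNReal.tsum_le_tsum fun x => h x x.2.2
    _ = ν' (s ∩ S) := by
      simpa using tsum_measure_preimage_singleton hsS (f := id) (μ := ν') (by simp)
    _ ≤ ν' s := measure_mono Set.inter_subset_left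

lemma le_smul_of_forall_real_singleton_le [MeasurableSingletonClass α] [IsFiniteMeasure ν]
    [IsFiniteMeasure ν'] {C : ℝ≥0} {S : Set α} (hS : S.Countable) (hνS : ∀ᵐ x ∂ν, x ∈ S)
    (h : ∀ x ∈ S, ν.real {x} ≤ C * ν'.real {x}) : ν ≤ C • ν' := by
  refine le_of_forall_singleton_le hS hνS fun x hx => ?_
  rw [← ENNReal.toReal_le_toReal (measure_ne_top _ _) (measure_ne_top _ _)]
  exact (h x hx).trans_eq (measureReal_nnreal_smul_apply C).symm

lemma le_smul_of_forall_real_singleton_image_le [MeasurableSingletonClass α] [DecidableEq α]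
    [IsFiniteMeasure ν] [IsFiniteMeasure ν'] {C : ℝ≥0} {ι : Type*} {s : Finset ι} {g : ι → α}
    (hν : ∀ᵐ x ∂ν, x ∈ s.image g) (h : ∀ i ∈ s, ν.real {g i} ≤ C * ν'.real {g i}) :
    ν ≤ C • ν' :=
  le_smul_of_forall_real_singleton_le (s.image g).countable_toSet hν (Finset.forall_mem_image.2 h)

lemma integral_le_of_le_smul {C : ℝ≥0} {f : α → ℝ} (h : ν ≤ C • ν') (hf : 0 ≤ᵐ[ν'] f)
    (hfi : Integrable f ν') : ∫ x, f x ∂ν ≤ C * ∫ x, f x ∂ν' :=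
  calc ∫ x, f x ∂ν ≤ ∫ x, f x ∂(C • ν') :=
        integral_mono_measure h (Measure.ae_smul_measure hf C) hfi.smul_measure_nnreal
    _ = C * ∫ x, f x ∂ν' := integral_smul_nnreal_measure f C

end Domination

section Pi

variable {ι : Type*} [Fintype ι] {α : ι → Type*} [∀ i, MeasurableSpace (α i)]
  {ν ν' : ∀ i, Measure (α i)}

lemma measure_pi_mono [∀ i, SigmaFinite (ν i)] (h : ∀ i, ν i ≤ ν' i) :
    Measure.pi ν ≤ Measure.pi ν' := by
  have houter : (Measure.pi ν).toOuterMeasure ≤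
      OuterMeasure.pi fun i => (ν' i).toOuterMeasure := by
    refine OuterMeasure.le_pi.2 fun s _ => ?_
    calc Measure.pi ν (Set.univ.pi s) = ∏ i, ν i (s i) := Measure.pi_pi ν s
      _ ≤ ∏ i, ν' i (s i) := Finset.prod_le_prod' fun i _ => h i (s i)
  refine Measure.le_iff.2 fun s hs => ?_
  rw [Measure.pi_def ν', toMeasure_apply _ _ hs]
  exact houter s

lemma measure_pi_smul [∀ i, SigmaFinite (ν i)] (C : ι → ℝ≥0) :
    Measure.pi (fun i => C i • ν i) = (∏ i, C i) • Measure.pi ν := by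
  refine Measure.pi_eq fun s _ => ?_
  simp only [Measure.coe_nnreal_smul_apply, Measure.pi_pi, ENNReal.ofNNReal_finsetProd,
    Finset.prod_mul_distrib]

lemma measure_pi_le_smul [∀ i, SigmaFinite (ν i)] [∀ i, SigmaFinite (ν' i)] {C : ι → ℝ≥0}
    (h : ∀ i, ν i ≤ C i • ν' i) : Measure.pi ν ≤ (∏ i, C i) • Measure.pi ν' :=
  (measure_pi_mono h).trans_eq (measure_pi_smul C)

lemma measure_pi_eq_one_of_le_smul [∀ i, IsProbabilityMeasure (ν i)]
    [∀ i, IsProbabilityMeasure (ν' i)] {C : ι → ℝ≥0} (h : ∀ i, ν i ≤ C i • ν' i)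
    {s : Set (∀ i, α i)} (hs : MeasurableSet s) (hone : Measure.pi ν' s = 1) :
    Measure.pi ν s = 1 := by
  rw [← mem_ae_iff_prob_eq_one hs] at hone ⊢
  exact (Measure.absolutelyContinuous_of_le_smul (measure_pi_le_smul h)).ae_le hone

end Pi

lemma measurableSet_exists_mem_ge {α : Type*} [Preorder α] [TopologicalSpace α]
    [ClosedIicTopology α] [MeasurableSpace α] [OpensMeasurableSpace α] (B : Finset α) :
    MeasurableSet {x | ∃ b ∈ B, x ≤ b} := by
  have h : {x | ∃ b ∈ B, x ≤ b} = ⋃ b ∈ B, Set.Iic b := by ext; simp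
  rw [h]
  exact B.measurableSet_biUnion fun b _ => measurableSet_Iic

section MapRoundUp

variable {α : Type*} [LinearOrder α] [TopologicalSpace α] [OrderTopology α]
  [SecondCountableTopology α] [MeasurableSpace α] [BorelSpace α] {G : Finset α} {ν : Measure α}

lemma measurable_roundUp (G : Finset α) : Measurable (roundUp G) :=
  (roundUp_mono G).measurable

instance isProbabilityMeasure_map_roundUp (ν : Measure α) [IsProbabilityMeasure ν]
    (G : Finset α) : IsProbabilityMeasure (ν.map (roundUp G)) :=
  Measure.isProbabilityMeasure_map (measurable_roundUp G).aemeasurable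

lemma ae_map_roundUp_mem {b : α} (hb : b ∈ G) (hν : ∀ᵐ x ∂ν, x ≤ b) :
    ∀ᵐ x ∂ν.map (roundUp G), x ∈ G := by
  refine (ae_map_iff (measurable_roundUp G).aemeasurable G.measurableSet).2 ?_
  filter_upwards [hν] with x hx using roundUp_mem hb hx

lemma map_roundUp_singleton {a : α} {S : Set α} (hνS : ∀ᵐ x ∂ν, x ∈ S) (hS : S ⊆ Set.Ioi a)
    {g : ℕ → α} {N l : ℕ} (hg : StrictMonoOn g (Set.Iic N)) (hl : l ≤ N) :
    ν.map (roundUp ((Finset.Iic N).image g)) {g l} =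
      ν (Set.Ioc (if l = 0 then a else g (l - 1)) (g l) ∩ S) := by
  rw [Measure.map_apply (measurable_roundUp _) (measurableSet_singleton _)]
  refine measure_congr ?_
  filter_upwards [hνS] with x hx
  have hax : a < x := hS hx
  refine propext ((roundUp_image_Iic_eq_iff hg hl).trans ?_)
  change _ ↔ ((if l = 0 then a else g (l - 1)) < x ∧ x ≤ g l) ∧ x ∈ S
  split_ifs with hl0 <;> simp [hl0, hx, hax, and_comm]

lemma measurable_forall_roundUp {ι : Type*} (G : Finset α) :
    Measurable fun (x : ι → α) i => roundUp G (x i) :=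
  measurable_pi_lambda _ fun i => (measurable_roundUp G).comp (measurable_pi_apply i)

variable {ι : Type*} [Fintype ι]

lemma pi_map_roundUp (μ : ι → Measure α) [∀ i, IsFiniteMeasure (μ i)] (G : Finset α) :
    Measure.pi (fun i => (μ i).map (roundUp G)) =
      (Measure.pi μ).map fun x i => roundUp G (x i) :=
  (Measure.pi_map_pi fun _ => (measurable_roundUp G).aemeasurable).symm

lemma pi_map_roundUp_exists_mem_ge (μ : ι → Measure α) [∀ i, IsFiniteMeasure (μ i)]
    {B : Finset (ι → α)} (hB : ∀ b ∈ B, ∀ i, b i ∈ G) :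
    Measure.pi (fun i => (μ i).map (roundUp G)) {x | ∃ b ∈ B, x ≤ b} =
      Measure.pi μ {x | ∃ b ∈ B, x ≤ b} := by
  rw [pi_map_roundUp, Measure.map_apply (measurable_forall_roundUp G)
    (measurableSet_exists_mem_ge B)]
  congr 1
  ext x
  exact exists_congr fun b => and_congr_right fun hb => forall_roundUp_le_iff (hB b hb)

end MapRoundUp

section ParetoMin

variable {n : ℕ} {B : Finset (Fin n → ℝ)} {c : Fin n → ℝ} {G : Finset ℝ}

lemma paretoMinF_nonneg (hB : ∀ b ∈ B, 0 ≤ b) (hc : 0 ≤ c) (x : Fin n → ℝ) :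
    0 ≤ paretoMinF c B x := by
  refine Real.sInf_nonneg ?_
  rintro _ ⟨b, ⟨hb, -⟩, rfl⟩
  exact Finset.sum_nonneg fun i _ => mul_nonneg (hc i) (hB b hb i)

lemma integrable_paretoMinF (c : Fin n → ℝ) (B : Finset (Fin n → ℝ)) (ν : Measure (Fin n → ℝ))
    [IsFiniteMeasure ν] : Integrable (paretoMinF c B) ν := by
  -- `paretoMinF c B x` depends only on which elements of `B` dominate `x`: finitely many cases.
  let dominators : (Fin n → ℝ) → B → Prop := fun x b => x ≤ b
  let minCost : (B → Prop) → ℝ := fun p => sInf ((fun b : B => ∑ i, c i * b.1 i) '' {b | p b})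
  have hdom : Measurable dominators :=
    measurable_pi_lambda _ fun b => measurableSet_setOfPred.1 measurableSet_Iic
  have hfactor : paretoMinF c B = minCost ∘ dominators := by
    funext x
    refine congrArg sInf (Set.ext fun y => ?_)
    simp [dominators, and_left_comm, and_assoc]
  rw [hfactor]
  exact Integrable.of_finite.comp_measurable hdom

lemma integral_paretoMinF_pi_le {ν ν' : Fin n → Measure ℝ} [∀ i, IsFiniteMeasure (ν i)]
    [∀ i, IsFiniteMeasure (ν' i)] {C : Fin n → ℝ≥0} (h : ∀ i, ν i ≤ C i • ν' i)
    (hB : ∀ b ∈ B, 0 ≤ b) (hc : 0 ≤ c) :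
    ∫ x, paretoMinF c B x ∂Measure.pi ν ≤
      (∏ i, (C i : ℝ)) * ∫ x, paretoMinF c B x ∂Measure.pi ν' := by
  exact_mod_cast integral_le_of_le_smul (measure_pi_le_smul h)
    (.of_forall (paretoMinF_nonneg hB hc)) (integrable_paretoMinF c B _)

lemma paretoMinF_roundUp (hB : ∀ b ∈ B, ∀ i, b i ∈ G) (x : Fin n → ℝ) :
    paretoMinF c B (fun i => roundUp G (x i)) = paretoMinF c B x := by
  have h : {b | b ∈ B ∧ (fun i => roundUp G (x i)) ≤ b} = {b | b ∈ B ∧ x ≤ b} :=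
    Set.ext fun b => and_congr_right fun hb => forall_roundUp_le_iff (hB b hb)
  rw [paretoMinF, paretoMinF, h]

lemma integral_paretoMinF_pi_map_roundUp (μ : Fin n → Measure ℝ) [∀ i, IsFiniteMeasure (μ i)]
    (hB : ∀ b ∈ B, ∀ i, b i ∈ G) :
    ∫ x, paretoMinF c B x ∂Measure.pi (fun i => (μ i).map (roundUp G)) =
      ∫ x, paretoMinF c B x ∂Measure.pi μ := by
  rw [pi_map_roundUp, integral_map (measurable_forall_roundUp G).aemeasurable
    (integrable_paretoMinF c B _).aestronglyMeasurable]
  simp only [paretoMinF_roundUp hB]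

end ParetoMin

theorem stmt17_general {n : ℕ} (μ μt : Fin n → Measure ℝ)
    [∀ i, IsProbabilityMeasure (μ i)] [∀ i, IsProbabilityMeasure (μt i)]
    (hμ : ∀ i, μ i (Set.Icc 0 1) = 1)
    (K : Fin n → ℝ) (hK : ∀ i, 0 < K i)
    (M : ℕ) (g : ℕ → ℝ)
    (hg0 : 0 ≤ g 0)
    (hgmono : ∀ l l' : ℕ, l < l' → l' ≤ M + 1 → g l < g l')
    (hgtop : g (M + 1) = 1)
    (hsupp : ∀ i, μt i {x | ∃ l ≤ M + 1, x = g l} = 1)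
    (hsand : ∀ i, ∀ l ≤ M + 1,
      (K i)⁻¹ *
          (μ i (Set.Ioc (if l = 0 then (-1 : ℝ) else g (l - 1)) (g l) ∩ Set.Icc 0 1)).toReal ≤
        (μt i {g l}).toReal ∧
      (μt i {g l}).toReal ≤
        K i *
          (μ i (Set.Ioc (if l = 0 then (-1 : ℝ) else g (l - 1)) (g l) ∩ Set.Icc 0 1)).toReal)
    (B : Finset (Fin n → ℝ)) (hB : ∀ b ∈ B, ∀ i, ∃ l ≤ M + 1, b i = g l)
    (c : Fin n → ℝ) (hc : ∀ i, 0 ≤ c i) :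
    (Measure.pi μ {x | ∃ b ∈ B, x ≤ b} = 1 ↔ Measure.pi μt {x | ∃ b ∈ B, x ≤ b} = 1) ∧
    (Measure.pi μ {x | ∃ b ∈ B, x ≤ b} = 1 →
      (∏ i, K i)⁻¹ * ∫ x, paretoMinF c B x ∂(Measure.pi μ) ≤
          ∫ x, paretoMinF c B x ∂(Measure.pi μt) ∧
        ∫ x, paretoMinF c B x ∂(Measure.pi μt) ≤
          (∏ i, K i) * ∫ x, paretoMinF c B x ∂(Measure.pi μ)) := by
  have hg : StrictMonoOn g (Set.Iic (M + 1)) := fun l _ l' hl' h => hgmono l l' h hl'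
  set G := (Finset.Iic (M + 1)).image g with hG
  have hG_coe : {x | ∃ l ≤ M + 1, x = g l} = (G : Set ℝ) := by ext; simp [hG, eq_comm]
  have hBG : ∀ b ∈ B, ∀ i, b i ∈ G := fun b hb i => hG_coe.subset (hB b hb i)
  have hG0 : ∀ q ∈ G, 0 ≤ q := Finset.forall_mem_image.2 fun l hl =>
    hg0.trans (hg.monotoneOn (Nat.zero_le _) (Finset.mem_Iic.1 hl) (Nat.zero_le l))
  have hB0 : ∀ b ∈ B, 0 ≤ b := fun b hb i => hG0 _ (hBG b hb i)
  have hμ_ae : ∀ i, ∀ᵐ x ∂μ i, x ∈ Set.Icc (0 : ℝ) 1 := fun i =>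
    (mem_ae_iff_prob_eq_one measurableSet_Icc).2 (hμ i)
  have hμt_ae : ∀ i, ∀ᵐ x ∂μt i, x ∈ G := fun i =>
    (mem_ae_iff_prob_eq_one G.measurableSet).2 (hG_coe ▸ hsupp i)
  have hround_ae : ∀ i, ∀ᵐ x ∂(μ i).map (roundUp G), x ∈ G := fun i =>
    ae_map_roundUp_mem (hG_coe.subset ⟨_, le_rfl, hgtop.symm⟩) ((hμ_ae i).mono fun _ h => h.2)
  have hpos : Set.Icc (0 : ℝ) 1 ⊆ Set.Ioi (-1) := fun x hx => neg_one_lt_zero.trans_le hx.1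
  lift K to Fin n → ℝ≥0 using fun i => (hK i).le
  have hatom : ∀ i, ∀ l ≤ M + 1, (μ i).map (roundUp G) {g l} =
      μ i (Set.Ioc (if l = 0 then (-1 : ℝ) else g (l - 1)) (g l) ∩ Set.Icc 0 1) := fun i _ hl =>
    map_roundUp_singleton (hμ_ae i) hpos hg hl
  have hle : ∀ i, μt i ≤ K i • (μ i).map (roundUp G) := fun i =>
    le_smul_of_forall_real_singleton_image_le (hμt_ae i) fun l hl => by
      rw [Finset.mem_Iic] at hl
      simpa only [Measure.real, hatom i l hl] using (hsand i l hl).2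
  have hge : ∀ i, (μ i).map (roundUp G) ≤ K i • μt i := fun i =>
    le_smul_of_forall_real_singleton_image_le (hround_ae i) fun l hl => by
      rw [Finset.mem_Iic] at hl
      simpa only [Measure.real, hatom i l hl] using (inv_mul_le_iff₀ (hK i)).1 (hsand i l hl).1
  have hmeas := measurableSet_exists_mem_ge B
  rw [← pi_map_roundUp_exists_mem_ge μ hBG, ← integral_paretoMinF_pi_map_roundUp μ hBG,
    inv_mul_le_iff₀ (Finset.prod_pos fun i _ => hK i)]
  exact ⟨⟨measure_pi_eq_one_of_le_smul hle hmeas, measure_pi_eq_one_of_le_smul hge hmeas⟩, fun _ =>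
    ⟨integral_paretoMinF_pi_le hge hB0 hc, integral_paretoMinF_pi_le hle hB0 hc⟩⟩

theorem stmt17 {n : ℕ} (μ μt : Fin n → Measure ℝ)
    [∀ i, IsProbabilityMeasure (μ i)] [∀ i, IsProbabilityMeasure (μt i)]
    (hμ : ∀ i, μ i (Set.Icc 0 1) = 1)
    (ε : ℝ) (hε : ε ∈ Set.Ioo (0:ℝ) 1)
    (M : ℕ) (g : ℕ → ℝ)
    (hg0 : 0 ≤ g 0)
    (hgmono : ∀ l l' : ℕ, l < l' → l' ≤ M+1 → g l < g l')
    (hgtop : g (M+1) = 1)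
    (hsupp : ∀ i, μt i {x | ∃ l ≤ M+1, x = g l} = 1)
    (hsand : ∀ i, ∀ l ≤ M+1,
      ((1+ε)^2)⁻¹ *
          (μ i (Set.Ioc (if l = 0 then (-1:ℝ) else g (l-1)) (g l) ∩ Set.Icc 0 1)).toReal ≤
        (μt i {g l}).toReal ∧
      (μt i {g l}).toReal ≤
        (1+ε)^2 *
          (μ i (Set.Ioc (if l = 0 then (-1:ℝ) else g (l-1)) (g l) ∩ Set.Icc 0 1)).toReal)
    (B : Finset (Fin n → ℝ)) (hB : ∀ b ∈ B, ∀ i, ∃ l ≤ M+1, b i = g l)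
    (c : Fin n → ℝ) (hc : ∀ i, 0 ≤ c i) :
    (Measure.pi μ {x | ∃ b ∈ B, x ≤ b} = 1 ↔ Measure.pi μt {x | ∃ b ∈ B, x ≤ b} = 1) ∧
    (Measure.pi μ {x | ∃ b ∈ B, x ≤ b} = 1 →
      ((1+ε)^(2*n))⁻¹ * ∫ x, paretoMinF c B x ∂(Measure.pi μ) ≤
          ∫ x, paretoMinF c B x ∂(Measure.pi μt) ∧
        ∫ x, paretoMinF c B x ∂(Measure.pi μt) ≤
          (1+ε)^(2*n) * ∫ x, paretoMinF c B x ∂(Measure.pi μ)) := by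
  simpa only [Finset.prod_const, Finset.card_univ, Fintype.card_fin, ← pow_mul] using
    stmt17_general μ μt hμ (fun _ => (1 + ε) ^ 2) (fun _ => by have := hε.1; positivity)
      M g hg0 hgmono hgtop hsupp hsand B hB c hc
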